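/- The total variation distance between the Gaussian density with mean log y and variance 1/y and the log-Gamma density with parameters y and 1 satisfies TV(f_Normal(·|log y, y⁻¹), f_logGamma(·|y,1)) ≤ √(5/(24y)) + O(y^(−3/2)) as y → ∞; precisely, there exist constants C > 0 and Y₀ > 0 such that for all real y ≥ Y₀, (1/2)∫_ℝ |f_Normal(ξ|log y, y⁻¹) − f_logGamma(ξ|y,1)| dξ ≤ √(5/(24y)) + C·y^(−3/2). -/

import Mathlib

open Real MeasureTheory Filter

/-- Gaussian density with mean `m` and variance `v`. -/
noncomputable def fNormal (m v ξ : ℝ) : ℝ :=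
  (Real.sqrt (2 * Real.pi * v))⁻¹ * Real.exp (-(ξ - m) ^ 2 / (2 * v))

/-- log-Gamma density with parameters `r` and `s`. -/
noncomputable def fLogGamma (r s ξ : ℝ) : ℝ :=
  (Real.Gamma r * s ^ r)⁻¹ * Real.exp (r * ξ - Real.exp ξ / s)

/-- Kullback–Leibler divergence between densities `f` and `g` on `ℝ`. -/
noncomputable def KL (f g : ℝ → ℝ) : ℝ :=
  ∫ ξ : ℝ, f ξ * Real.log (f ξ / g ξ)

/-! The relative entropy of the normal density with respect to the log-Gamma density is explicit:
it is the remainder in Stirling's formula for `log Γ(y)` plus `y (e^{1/(2y)} - 1 - 1/(2y))`, the two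
summands being at most `1/(12y)` and `1/(8y) + 1/(36y²)`. Pinsker's inequality turns this into a
bound on the total variation distance with leading term `√(5/(48y))`; the factor `√2` gained
over `√(5/(24y))` absorbs the lower order term. -/

open InformationTheory ProbabilityTheory
open scoped NNReal Topology

section Pinsker

lemma three_mul_sub_one_sq_le_mul_klFun {x : ℝ} (hx : 0 ≤ x) :
    3 * (x - 1) ^ 2 ≤ (2 * x + 4) * klFun x := by
  let h : ℝ → ℝ := fun x => (2 * x + 4) * klFun x - 3 * (x - 1) ^ 2
  let h' : ℝ → ℝ := fun x => 2 * klFun x + (2 * x + 4) * log x - 6 * (x - 1)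
  have hlin (x : ℝ) : HasDerivAt (fun x : ℝ => 2 * x + 4) 2 x := by
    simpa using ((hasDerivAt_id x).const_mul 2).add_const 4
  have hh' : ∀ x ≠ 0, HasDerivAt h (h' x) x := fun x hx => by
    have hsq : HasDerivAt (fun x : ℝ => 3 * (x - 1) ^ 2) (6 * (x - 1)) x := by
      convert! (((hasDerivAt_id x).sub_const 1).pow 2).const_mul 3 using 1
      simp only [id_eq, Nat.cast_ofNat]
      ring
    exact ((hlin x).mul (hasDerivAt_klFun hx)).sub hsq
  have hh'' : ∀ x ≠ 0, HasDerivAt h' (4 * (log x - (1 - x⁻¹))) x := fun x hx => by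
    convert! (((hasDerivAt_klFun hx).const_mul 2).add
      ((hlin x).mul (hasDerivAt_log hx))).sub (((hasDerivAt_id x).sub_const 1).const_mul 6) using 1
    field_simp
    ring
  have hconv : ConvexOn ℝ (Set.Ici 0) h := by
    have hcont : Continuous h := by
      have := continuous_klFun
      fun_prop
    refine convexOn_of_hasDerivWithinAt2_nonneg (convex_Ici 0) hcont.continuousOn
      (f' := h') (f'' := fun x => 4 * (log x - (1 - x⁻¹))) ?_ ?_ ?_ <;>
      rw [interior_Ici] <;> intro x (hx : 0 < x)
    · exact (hh' x hx.ne').hasDerivWithinAt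
    · exact (hh'' x hx.ne').hasDerivWithinAt
    · linarith [one_sub_inv_le_log_of_pos hx]
  have hmin : IsMinOn h (Set.Ici 0) 1 := by
    refine hconv.isMinOn_of_rightDeriv_eq_zero (by simp) ?_
    rw [(hh' 1 one_ne_zero).hasDerivWithinAt.derivWithin (uniqueDiffWithinAt_Ioi 1)]
    simp [h', klFun_one]
  have hle : h 1 ≤ h x := hmin hx
  simp only [h, klFun_one] at hle
  linarith

lemma mul_log_div_sub_add_eq_mul_klFun (a : ℝ) {b : ℝ} (hb : b ≠ 0) :
    a * log (a / b) - a + b = b * klFun (a / b) := by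
  rw [klFun_apply]
  field_simp
  ring

lemma three_mul_sub_sq_le {a b : ℝ} (ha : 0 ≤ a) (hb : 0 ≤ b) (hab : b = 0 → a = 0) :
    3 * (a - b) ^ 2 ≤ (2 * a + 4 * b) * (a * log (a / b) - a + b) := by
  rcases hb.eq_or_lt' with rfl | hb
  · simp [hab rfl]
  · have hx : 0 ≤ a / b := by positivity
    calc 3 * (a - b) ^ 2 = b ^ 2 * (3 * (a / b - 1) ^ 2) := by field_simp
      _ ≤ b ^ 2 * ((2 * (a / b) + 4) * klFun (a / b)) :=
        mul_le_mul_of_nonneg_left (three_mul_sub_one_sq_le_mul_klFun hx) (sq_nonneg b)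
      _ = (2 * a + 4 * b) * (a * log (a / b) - a + b) := by
        rw [mul_log_div_sub_add_eq_mul_klFun a hb.ne']
        field_simp

lemma mul_log_div_sub_add_nonneg {a b : ℝ} (ha : 0 ≤ a) (hb : 0 ≤ b) (hab : b = 0 → a = 0) :
    0 ≤ a * log (a / b) - a + b := by
  rcases hb.eq_or_lt' with rfl | hb
  · simp [hab rfl]
  · rw [mul_log_div_sub_add_eq_mul_klFun a hb.ne']
    exact mul_nonneg hb.le (klFun_nonneg (by positivity))

-- Integrating this and then choosing `t` takes the place of the Cauchy–Schwarz inequality.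
lemma two_mul_mul_abs_sub_le {a b : ℝ} (ha : 0 ≤ a) (hb : 0 ≤ b) (hab : b = 0 → a = 0) (t : ℝ) :
    2 * t * |a - b| ≤ t ^ 2 * ((2 * a + 4 * b) / 3) + (a * log (a / b) - a + b) := by
  have hsq := three_mul_sub_sq_le ha hb hab
  have hkl := mul_log_div_sub_add_nonneg ha hb hab
  set k := a * log (a / b) - a + b
  set w := (2 * a + 4 * b) / 3 with hw
  have hdw : (a - b) ^ 2 ≤ w * k := by
    rw [hw]
    linarith
  refine le_of_sq_le_sq ?_ (by positivity)
  calc (2 * t * |a - b|) ^ 2 = 4 * t ^ 2 * (a - b) ^ 2 := by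
        rw [mul_pow, sq_abs]
        ring
    _ ≤ 4 * t ^ 2 * (w * k) := by gcongr
    _ ≤ (t ^ 2 * w + k) ^ 2 := by linarith [sq_nonneg (t ^ 2 * w - k)]

theorem pinsker_inequality {α : Type*} [MeasurableSpace α] {μ : Measure α} {f g : α → ℝ}
    (hf : 0 ≤ᵐ[μ] f) (hg : 0 ≤ᵐ[μ] g) (hfg : ∀ᵐ x ∂μ, g x = 0 → f x = 0)
    (hf1 : ∫ x, f x ∂μ = 1) (hg1 : ∫ x, g x ∂μ = 1)
    (hlog : Integrable (fun x => f x * log (f x / g x)) μ) :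
    (1 / 2) * ∫ x, |f x - g x| ∂μ ≤ √((1 / 2) * ∫ x, f x * log (f x / g x) ∂μ) := by
  have hfi := integrable_of_integral_eq_one hf1
  have hgi := integrable_of_integral_eq_one hg1
  set D := ∫ x, |f x - g x| ∂μ
  have hquad (t : ℝ) : 2 * t * D ≤ 2 * t ^ 2 + ∫ x, f x * log (f x / g x) ∂μ := by
    have hw : Integrable (fun x => t ^ 2 * ((2 * f x + 4 * g x) / 3)) μ :=
      (((hfi.const_mul 2).add (hgi.const_mul 4)).div_const 3).const_mul _
    have hk : Integrable (fun x => f x * log (f x / g x) - f x) μ := hlog.sub hfi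
    have hkg : Integrable (fun x => f x * log (f x / g x) - f x + g x) μ := hk.add hgi
    calc 2 * t * D = ∫ x, 2 * t * |f x - g x| ∂μ := (integral_const_mul _ _).symm
      _ ≤ ∫ x, t ^ 2 * ((2 * f x + 4 * g x) / 3) + (f x * log (f x / g x) - f x + g x) ∂μ := by
        refine integral_mono_ae ((hfi.sub hgi).abs.const_mul _) (hw.add hkg) ?_
        filter_upwards [hf, hg, hfg] with x hfx hgx hfgx
        exact two_mul_mul_abs_sub_le hfx hgx hfgx t
      _ = 2 * t ^ 2 + ∫ x, f x * log (f x / g x) ∂μ := by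
        rw [integral_add hw hkg, integral_add hk hgi, integral_sub hlog hfi,
          integral_const_mul, integral_div,
          integral_add (hfi.const_mul 2) (hgi.const_mul 4), integral_const_mul,
          integral_const_mul, hf1, hg1]
        ring
  refine le_sqrt_of_sq_le ?_
  linarith [hquad (D / 2)]

end Pinsker

section Stirling

/-- Binet's function, the remainder in Stirling's formula for `log Γ`. -/
noncomputable def binet (y : ℝ) : ℝ :=
  log (Gamma y) - ((y - 1 / 2) * log y - y + log (2 * π) / 2)

variable {y : ℝ}

lemma log_Gamma_add_one (hy : 0 < y) : log (Gamma (y + 1)) = log (Gamma y) + log y := by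
  rw [Gamma_add_one hy.ne', log_mul hy.ne' (Gamma_pos_of_pos hy).ne', add_comm]

lemma add_half_mul_log_one_add_inv_le (hy : 0 < y) :
    (y + 1 / 2) * log (1 + y⁻¹) ≤ 1 + 1 / (12 * y * (y + 1)) := by
  set r := (1 / (2 * y + 1)) ^ 2 with hr
  have hr1 : r < 1 := by
    rw [hr, div_pow, one_pow, div_lt_one (by positivity)]
    nlinarith
  have hlog : HasSum (fun k : ℕ => 1 / (2 * k + 1) * r ^ k) ((y + 1 / 2) * log (1 + y⁻¹)) := by
    convert! (hasSum_log_one_add_inv hy).mul_left (y + 1 / 2) using 2 with k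
    rw [hr, ← pow_mul, pow_succ]
    field_simp
  have hgeom : HasSum (fun k : ℕ => r ^ (k + 1) / 3) (1 / (12 * y * (y + 1))) := by
    convert! ((hasSum_geometric_of_lt_one (sq_nonneg _) hr1).mul_right r).div_const 3 using 1
    have : 1 - r = 4 * y * (y + 1) * r := by
      rw [hr]
      field_simp
      ring
    rw [this]
    have : r ≠ 0 := by positivity
    field_simp
    norm_num
  have htail := (hasSum_nat_add_iff' 1).mpr hlog
  have hle := hasSum_le (fun k => ?_) htail hgeom
  · simp only [Finset.range_one, Finset.sum_singleton, pow_zero, CharP.cast_eq_zero] at hle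
    linarith
  · rw [div_mul_eq_mul_div, one_mul]
    gcongr
    push_cast
    linarith [k.cast_nonneg (α := ℝ)]

lemma binet_sub_binet_add_one_le (hy : 0 < y) :
    binet y - binet (y + 1) ≤ 1 / (12 * y) - 1 / (12 * (y + 1)) := by
  have hlog : log (1 + y⁻¹) = log (y + 1) - log y := by
    rw [← log_div (by positivity) hy.ne', add_div, div_self hy.ne', one_div]
  calc binet y - binet (y + 1) = (y + 1 / 2) * log (1 + y⁻¹) - 1 := by
        rw [binet, binet, log_Gamma_add_one hy, hlog]
        ring
    _ ≤ 1 / (12 * y * (y + 1)) := by linarith [add_half_mul_log_one_add_inv_le hy]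
    _ = 1 / (12 * y) - 1 / (12 * (y + 1)) := by
        field_simp
        ring

lemma tendsto_natCast_add_mul_log_add_sub_log (a c : ℝ) :
    Tendsto (fun n : ℕ => (n + c) * (log (n + a) - log n)) atTop (𝓝 a) := by
  have hmul := (tendsto_mul_log_one_add_div_atTop a).comp tendsto_natCast_atTop_atTop
  have hlog : Tendsto (fun n : ℕ => log (1 + a / n)) atTop (𝓝 0) := by
    simpa using ((tendsto_const_div_atTop_nhds_zero_nat a).const_add 1).log (by simp)
  have hsum := hmul.add (hlog.const_mul c)
  rw [mul_zero, add_zero] at hsum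
  refine hsum.congr' ?_
  filter_upwards [eventually_gt_atTop 0,
    tendsto_natCast_atTop_atTop.eventually_gt_atTop (-a)] with n hn hna
  have hn' : (n : ℝ) ≠ 0 := by positivity
  rw [← log_div (by linarith) hn', add_div, div_self hn', Function.comp_apply]
  ring

lemma binet_add_natCast_add_one (hy : 0 < y) {n : ℕ} (hn : n ≠ 0) :
    binet (y + (n + 1 : ℕ)) =
      (log (Gamma y) - BohrMollerup.logGammaSeq y n) + (log (Stirling.stirlingSeq n) - log (√π))
        - ((n + (y + 1 / 2)) * (log (n + (y + 1)) - log n) - (y + 1)) := by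
  have hn' : (0 : ℝ) < n := by positivity
  have hGamma : log (Gamma (y + (n + 1 : ℕ))) =
      log (Gamma y) + ∑ m ∈ Finset.range (n + 1), log (y + m) :=
    BohrMollerup.f_add_nat_eq (f := log ∘ Gamma) log_Gamma_add_one hy (n + 1)
  rw [binet, hGamma, BohrMollerup.logGammaSeq, Stirling.log_stirlingSeq_formula,
    log_sqrt pi_pos.le, log_mul two_ne_zero hn'.ne', log_mul two_ne_zero pi_ne_zero,
    log_div hn'.ne' (exp_ne_zero 1), log_exp]
  push_cast
  rw [show (n : ℝ) + (y + 1) = y + (n + 1) by ring]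
  ring

lemma tendsto_binet_add_natCast (hy : 0 < y) :
    Tendsto (fun n : ℕ => binet (y + n)) atTop (𝓝 0) := by
  rw [← tendsto_add_atTop_iff_nat 1]
  have hGamma := (BohrMollerup.tendsto_log_gamma hy).const_sub (log (Gamma y))
  have hStirling := (Stirling.tendsto_stirlingSeq_sqrt_pi.log (by positivity)).sub_const (log (√π))
  have hlog :=
    (tendsto_natCast_add_mul_log_add_sub_log (y + 1) (y + 1 / 2)).sub_const (y + 1)
  have hsum := (hGamma.add hStirling).sub hlog
  simp only [sub_self, add_zero] at hsum
  refine hsum.congr' ?_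
  filter_upwards [eventually_ne_atTop 0] with n hn
  exact (binet_add_natCast_add_one hy hn).symm

theorem binet_le (hy : 0 < y) : binet y ≤ 1 / (12 * y) := by
  have hmono : Monotone fun n : ℕ => binet (y + n) - 1 / (12 * (y + n)) := by
    refine monotone_nat_of_le_succ fun n => ?_
    have := binet_sub_binet_add_one_le (y := y + n) (by positivity)
    push_cast
    rw [← add_assoc]
    linarith
  have hinv : Tendsto (fun n : ℕ => 1 / (12 * (y + n))) atTop (𝓝 0) :=
    tendsto_const_nhds.div_atTop
      ((tendsto_atTop_add_const_left _ y tendsto_natCast_atTop_atTop).const_mul_atTop (by norm_num))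
  have hlim := (tendsto_binet_add_natCast hy).sub hinv
  have h0 := hmono.ge_of_tendsto hlim 0
  simp only [CharP.cast_eq_zero, add_zero, sub_zero] at h0
  linarith

end Stirling

section Densities

variable {m v r s : ℝ}

lemma fNormal_pos (hv : 0 < v) (ξ : ℝ) : 0 < fNormal m v ξ := by
  unfold fNormal
  positivity

lemma fLogGamma_pos (hr : 0 < r) (hs : 0 < s) (ξ : ℝ) : 0 < fLogGamma r s ξ := by
  have := Gamma_pos_of_pos hr
  unfold fLogGamma
  positivity

lemma integral_fNormal (m : ℝ) (hv : 0 < v) : ∫ ξ, fNormal m v ξ = 1 := by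
  lift v to ℝ≥0 using hv.le
  exact integral_gaussianPDFReal_eq_one m (by simpa using hv.ne')

lemma integral_exp_mul_sub_exp_div (hr : 0 < r) (hs : 0 < s) :
    ∫ ξ : ℝ, exp (r * ξ - exp ξ / s) = Gamma r * s ^ r := by
  have hsubst := integral_image_eq_integral_abs_deriv_smul MeasurableSet.univ
    (fun ξ _ => (hasDerivAt_exp ξ).hasDerivWithinAt) exp_injective.injOn
    (fun x => x ^ (r - 1) * exp (-(s⁻¹ * x)))
  rw [Set.image_univ, range_exp, Measure.restrict_univ,
    integral_rpow_mul_exp_neg_mul_Ioi hr (inv_pos.mpr hs), one_div, inv_inv, mul_comm] at hsubst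
  rw [hsubst]
  refine integral_congr_ae (ae_of_all _ fun ξ => ?_)
  simp only [abs_exp, smul_eq_mul, ← exp_mul, ← exp_add]
  ring_nf

lemma integral_fLogGamma (hr : 0 < r) (hs : 0 < s) : ∫ ξ, fLogGamma r s ξ = 1 := by
  have := Gamma_pos_of_pos hr
  simp only [fLogGamma]
  rw [integral_const_mul, integral_exp_mul_sub_exp_div hr hs, inv_mul_cancel₀ (by positivity)]

end Densities

section RelativeEntropy

variable {m v r s : ℝ}

lemma log_fNormal_div_fLogGamma (m : ℝ) (hv : 0 < v) (hr : 0 < r) (hs : 0 < s) (ξ : ℝ) :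
    log (fNormal m v ξ / fLogGamma r s ξ) =
      log (Gamma r * s ^ r) - log (2 * π * v) / 2 - (2 * v)⁻¹ * (ξ - m) ^ 2 - r * ξ
        + s⁻¹ * exp ξ := by
  have := Gamma_pos_of_pos hr
  rw [log_div (fNormal_pos hv ξ).ne' (fLogGamma_pos hr hs ξ).ne', fNormal, fLogGamma,
    log_mul (by positivity) (exp_ne_zero _), log_mul (by positivity) (exp_ne_zero _), log_exp,
    log_exp, log_inv, log_inv, log_sqrt (by positivity)]
  ring

lemma integral_fNormal_mul (m : ℝ) {v : ℝ≥0} (hv : v ≠ 0) (h : ℝ → ℝ) :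
    ∫ ξ, fNormal m v ξ * h ξ = ∫ ξ, h ξ ∂gaussianReal m v :=
  (integral_gaussianReal_eq_integral_smul hv).symm

lemma integrable_fNormal_mul_iff {v : ℝ≥0} (hv : v ≠ 0) {h : ℝ → ℝ} :
    Integrable (fun ξ => fNormal m v ξ * h ξ) ↔ Integrable h (gaussianReal m v) := by
  rw [gaussianReal_of_var_ne_zero m hv,
    integrable_withDensity_iff_integrable_smul' (measurable_gaussianPDF m v)
      (ae_of_all _ fun _ => gaussianPDF_lt_top)]
  simp only [toReal_gaussianPDF, smul_eq_mul]
  rfl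

lemma integrable_sub_sq_gaussianReal (m : ℝ) (v : ℝ≥0) :
    Integrable (fun ξ => (ξ - m) ^ 2) (gaussianReal m v) :=
  ((memLp_id_gaussianReal 2).sub (memLp_const m)).integrable_sq

lemma integral_sub_sq_gaussianReal (m : ℝ) (v : ℝ≥0) :
    ∫ ξ, (ξ - m) ^ 2 ∂gaussianReal m v = v := by
  simpa [variance_eq_integral measurable_id'.aemeasurable] using
    variance_fun_id_gaussianReal (μ := m) (v := v)

lemma integrable_id_gaussianReal (m : ℝ) (v : ℝ≥0) :
    Integrable (fun ξ => ξ) (gaussianReal m v) :=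
  (memLp_id_gaussianReal 1).integrable le_rfl

lemma integrable_exp_gaussianReal (m : ℝ) (v : ℝ≥0) : Integrable exp (gaussianReal m v) := by
  simpa using integrable_exp_mul_gaussianReal (μ := m) (v := v) 1

lemma integral_exp_gaussianReal (m : ℝ) (v : ℝ≥0) :
    ∫ ξ, exp ξ ∂gaussianReal m v = exp (m + v / 2) := by
  simpa [mgf] using congrFun (mgf_fun_id_gaussianReal (μ := m) (v := v)) 1

lemma integrable_fNormal_mul_log_div (m : ℝ) (hv : 0 < v) (hr : 0 < r) (hs : 0 < s) :
    Integrable (fun ξ => fNormal m v ξ * log (fNormal m v ξ / fLogGamma r s ξ)) := by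
  lift v to ℝ≥0 using hv.le
  rw [integrable_fNormal_mul_iff (by simpa using hv.ne')]
  simp only [log_fNormal_div_fLogGamma m hv hr hs]
  exact (((integrable_const _).sub ((integrable_sub_sq_gaussianReal m v).const_mul _)).sub
    ((integrable_id_gaussianReal m v).const_mul r)).add
      ((integrable_exp_gaussianReal m v).const_mul _)

theorem KL_fNormal_fLogGamma (m : ℝ) (hv : 0 < v) (hr : 0 < r) (hs : 0 < s) :
    KL (fNormal m v) (fLogGamma r s) =
      log (Gamma r * s ^ r) - log (2 * π * v) / 2 - 1 / 2 - r * m + s⁻¹ * exp (m + v / 2) := by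
  lift v to ℝ≥0 using hv.le
  have hv' : (v : ℝ) ≠ 0 := hv.ne'
  have hsq := (integrable_sub_sq_gaussianReal m v).const_mul (2 * (v : ℝ))⁻¹
  have hid := (integrable_id_gaussianReal m v).const_mul r
  have hexp := (integrable_exp_gaussianReal m v).const_mul s⁻¹
  rw [KL, integral_fNormal_mul m (by simpa using hv')]
  simp only [log_fNormal_div_fLogGamma m hv hr hs]
  rw [integral_add (by fun_prop) hexp, integral_sub (by fun_prop) hid,
    integral_sub (by fun_prop) hsq, integral_const_mul, integral_const_mul, integral_const_mul,
    integral_const, probReal_univ, one_smul, integral_sub_sq_gaussianReal, integral_id_gaussianReal,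
    integral_exp_gaussianReal]
  field_simp

end RelativeEntropy

section Asymptotics

variable {y : ℝ}

lemma KL_fNormal_fLogGamma_eq_binet_add (hy : 0 < y) :
    KL (fNormal (log y) y⁻¹) (fLogGamma y 1) =
      binet y + y * (exp (1 / (2 * y)) - 1 - 1 / (2 * y)) := by
  rw [KL_fNormal_fLogGamma (log y) (inv_pos.mpr hy) hy one_pos, binet, one_rpow, mul_one, exp_add,
    exp_log hy, log_mul (by positivity) (by positivity), log_inv,
    show y⁻¹ / 2 = 1 / (2 * y) by field_simp]
  field_simp
  ring

lemma exp_sub_one_sub_le {x : ℝ} (h0 : 0 ≤ x) (h1 : x ≤ 1) :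
    exp x - 1 - x ≤ x ^ 2 / 2 + 2 / 9 * x ^ 3 := by
  have h := exp_bound' h0 h1 (n := 3) (by norm_num)
  norm_num [Finset.sum_range_succ, Nat.factorial] at h
  linarith

theorem KL_fNormal_fLogGamma_le (hy : 1 / 2 ≤ y) :
    KL (fNormal (log y) y⁻¹) (fLogGamma y 1) ≤ 5 / (24 * y) + 1 / (36 * y ^ 2) := by
  have hy0 : 0 < y := by linarith
  have hx : 1 / (2 * y) ≤ 1 := by
    rw [div_le_one (by positivity)]
    linarith
  calc KL (fNormal (log y) y⁻¹) (fLogGamma y 1)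
      = binet y + y * (exp (1 / (2 * y)) - 1 - 1 / (2 * y)) :=
        KL_fNormal_fLogGamma_eq_binet_add hy0
    _ ≤ 1 / (12 * y) + y * ((1 / (2 * y)) ^ 2 / 2 + 2 / 9 * (1 / (2 * y)) ^ 3) := by
        gcongr
        · exact binet_le hy0
        · exact exp_sub_one_sub_le (by positivity) hx
    _ = 5 / (24 * y) + 1 / (36 * y ^ 2) := by
        field_simp
        ring

theorem half_integral_abs_fNormal_sub_fLogGamma_le (hy : 1 / 2 ≤ y) :
    (1 / 2) * ∫ ξ, |fNormal (log y) y⁻¹ ξ - fLogGamma y 1 ξ| ≤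
      √(5 / (48 * y) + 1 / (72 * y ^ 2)) := by
  have hy0 : 0 < y := by linarith
  have hv : 0 < y⁻¹ := inv_pos.mpr hy0
  have hpos := fLogGamma_pos hy0 one_pos
  calc (1 / 2) * ∫ ξ, |fNormal (log y) y⁻¹ ξ - fLogGamma y 1 ξ|
      ≤ √((1 / 2) * KL (fNormal (log y) y⁻¹) (fLogGamma y 1)) :=
        pinsker_inequality (ae_of_all _ fun ξ => (fNormal_pos hv ξ).le)
          (ae_of_all _ fun ξ => (hpos ξ).le) (ae_of_all _ fun ξ h => absurd h (hpos ξ).ne')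
          (integral_fNormal _ hv) (integral_fLogGamma hy0 one_pos)
          (integrable_fNormal_mul_log_div _ hv hy0 one_pos)
    _ ≤ √((1 / 2) * (5 / (24 * y) + 1 / (36 * y ^ 2))) := by
        gcongr
        exact KL_fNormal_fLogGamma_le hy
    _ = √(5 / (48 * y) + 1 / (72 * y ^ 2)) := by
        congr 1
        field_simp
        ring

end Asymptotics

theorem tv_normal_logGamma_asymptotic :
    ∃ C > (0 : ℝ), ∃ Y₀ > (0 : ℝ), ∀ y : ℝ, Y₀ ≤ y →
      (1 / 2) * ∫ ξ : ℝ, |fNormal (Real.log y) y⁻¹ ξ - fLogGamma y 1 ξ| ≤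
        Real.sqrt (5 / (24 * y)) + C * y ^ (-(3 : ℝ) / 2) := by
  refine ⟨1, one_pos, 1 / 2, by norm_num, fun y hy => ?_⟩
  have hy0 : 0 < y := by linarith
  have hle : 5 / (48 * y) + 1 / (72 * y ^ 2) ≤ 5 / (24 * y) := by
    field_simp
    linarith
  calc (1 / 2) * ∫ ξ : ℝ, |fNormal (Real.log y) y⁻¹ ξ - fLogGamma y 1 ξ|
      ≤ √(5 / (48 * y) + 1 / (72 * y ^ 2)) := half_integral_abs_fNormal_sub_fLogGamma_le hy
    _ ≤ √(5 / (24 * y)) := sqrt_le_sqrt hle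
    _ ≤ √(5 / (24 * y)) + 1 * y ^ (-(3 : ℝ) / 2) := le_add_of_nonneg_right (by positivity)
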